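/- For every v ∈ {23, 29, 41, 47, 53, 59, 71, 83}, there exists an RDSQS(2v), i.e., a Steiner quadruple system SQS(2v) whose derived design at every point is resolvable. -/

import Mathlib

open Finset

/-- A parallel class on point set `Y`: a collection of blocks that partitions `Y`. -/
def IsParallelClass (Y : Finset ℕ) (P : Finset (Finset ℕ)) : Prop :=
  (∀ b ∈ P, b ⊆ Y) ∧ ∀ y ∈ Y, ∃! b, b ∈ P ∧ y ∈ b

/-- A block collection `B` on point set `Y` is resolvable if it can be partitioned
into parallel classes of `Y`. -/
def Resolvable (Y : Finset ℕ) (B : Finset (Finset ℕ)) : Prop :=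
  ∃ (r : ℕ) (P : Fin r → Finset (Finset ℕ)),
    (∀ i, IsParallelClass Y (P i)) ∧ (∀ i, P i ⊆ B) ∧ ∀ b ∈ B, ∃! i, b ∈ P i

/-- The blocks of the derived design at a point `x`:
`{B \ {x} : x ∈ B, B ∈ B}`. -/
def derivedBlocks (B : Finset (Finset ℕ)) (x : ℕ) : Finset (Finset ℕ) :=
  (B.filter fun b => x ∈ b).image fun b => b.erase x

/-- A Steiner system S(t, k, v) on point set `X` with block collection `B`. -/
def IsSteiner (t k v : ℕ) (X : Finset ℕ) (B : Finset (Finset ℕ)) : Prop :=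
  X.card = v ∧ (∀ b ∈ B, b ⊆ X ∧ b.card = k) ∧
  ∀ T ⊆ X, T.card = t → ∃! b, b ∈ B ∧ T ⊆ b

/-- An RDS(t, k, v): a Steiner system S(t, k, v) whose derived design at every
point is resolvable. -/
def IsRDS (t k v : ℕ) (X : Finset ℕ) (B : Finset (Finset ℕ)) : Prop :=
  IsSteiner t k v X B ∧ ∀ x ∈ X, Resolvable (X.erase x) (derivedBlocks B x)

/-- Existence of an RDS(t, k, v). -/
def ExistsRDS (t k v : ℕ) : Prop := ∃ X B, IsRDS t k v X B

/-- Existence of an RDSQS(v), i.e. an RDS(3, 4, v). -/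
def ExistsRDSQS (v : ℕ) : Prop := ExistsRDS 3 4 v

/-- A Kirkman triple system KTS(v): a resolvable Steiner triple system. -/
def IsKTS (v : ℕ) (X : Finset ℕ) (B : Finset (Finset ℕ)) : Prop :=
  IsSteiner 2 3 v X B ∧ Resolvable X B

/-- Existence of a large set of Kirkman triple systems LKTS(v): a partition of
all 3-element subsets of a v-element set into v - 2 classes, each a KTS(v). -/
def ExistsLKTS (v : ℕ) : Prop :=
  ∃ (X : Finset ℕ) (C : Fin (v - 2) → Finset (Finset ℕ)),
    X.card = v ∧ (∀ i, IsKTS v X (C i)) ∧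
    (∀ T : Finset ℕ, (T ⊆ X ∧ T.card = 3) ↔ ∃ i, T ∈ C i) ∧
    ∀ (T : Finset ℕ) (i j : Fin (v - 2)), T ∈ C i → T ∈ C j → i = j

/-- A t-wise balanced design S(t, K, v) with block sizes from the set `K`. -/
def IsTBD (t : ℕ) (K : Set ℕ) (v : ℕ) (X : Finset ℕ) (B : Finset (Finset ℕ)) : Prop :=
  X.card = v ∧ (∀ b ∈ B, b ⊆ X ∧ b.card ∈ K) ∧
  ∀ T ⊆ X, T.card = t → ∃! b, b ∈ B ∧ T ⊆ b

/-- A group divisible design GDD(t, K, g*n) of type g^n: `Gs` is a partition of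
`X` into `n` groups of size `g`; blocks have sizes in `K`, meet every group in
at most one point, and every t-subset of `X` meeting every group in at most one
point lies in exactly one block. -/
def IsGDD (t : ℕ) (K : Set ℕ) (g n : ℕ) (X : Finset ℕ)
    (Gs Bs : Finset (Finset ℕ)) : Prop :=
  X.card = g * n ∧ Gs.card = n ∧
  (∀ G ∈ Gs, G ⊆ X ∧ G.card = g) ∧
  (∀ x ∈ X, ∃! G, G ∈ Gs ∧ x ∈ G) ∧
  (∀ b ∈ Bs, b ⊆ X ∧ b.card ∈ K) ∧
  (∀ b ∈ Bs, ∀ G ∈ Gs, (b ∩ G).card ≤ 1) ∧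
  ∀ T ⊆ X, T.card = t → (∀ G ∈ Gs, (T ∩ G).card ≤ 1) → ∃! b, b ∈ Bs ∧ T ⊆ b

/-- An RDGDD(t, K, g*n) of type g^n: a GDD whose derived design at every point
(on point set `X \ G`, where `G` is the group of the point) is resolvable. -/
def IsRDGDD (t : ℕ) (K : Set ℕ) (g n : ℕ) (X : Finset ℕ)
    (Gs Bs : Finset (Finset ℕ)) : Prop :=
  IsGDD t K g n X Gs Bs ∧
  ∀ x ∈ X, ∀ G ∈ Gs, x ∈ G → Resolvable (X \ G) (derivedBlocks Bs x)

/-- An RDSQS*(v): an SQS(v) with v ≡ 1 (mod 3) such that, for every point `x`,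
the derived blocks at `x` contain a parallel class `P'` (enumerated by `Bk`);
the multiset consisting of each triple of `P'` three times and each remaining
derived triple twice can be partitioned into (v-1) parallel classes
`P k l` (k ranging over Fin ((v-1)/3), l over Fin 3); and for each `k` the three
parallel classes `P k l` share the common triple `Bk k`. -/
def IsRDSQSstar (v : ℕ) (X : Finset ℕ) (B : Finset (Finset ℕ)) : Prop :=
  IsSteiner 3 4 v X B ∧ v % 3 = 1 ∧
  ∀ x ∈ X, ∃ (P' : Finset (Finset ℕ)) (Bk : Fin ((v - 1) / 3) → Finset ℕ)
    (P : Fin ((v - 1) / 3) → Fin 3 → Finset (Finset ℕ)),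
    P' ⊆ derivedBlocks B x ∧
    IsParallelClass (X.erase x) P' ∧
    (∀ k, Bk k ∈ P') ∧
    (∀ b ∈ P', ∃ k, Bk k = b) ∧
    Function.Injective Bk ∧
    (∀ k l, IsParallelClass (X.erase x) (P k l)) ∧
    ((∑ k, ∑ l, (P k l).val) =
        3 • P'.val + 2 • ((derivedBlocks B x) \ P').val) ∧
    ∀ k l, Bk k ∈ P k l

/-!
If `𝓡` resolves a Steiner system `S(t, k, |G| - 1)` on the non-identity elements of a group `G`, and
the sets `insert 1 T`, for `T` a block, are closed under the translations moving one of their points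
to `1`, then the left translates of these sets form an `S(t + 1, k + 1, |G|)`, all of whose derived
designs are translates of `𝓡`.

For `G` dihedral of order `2 * v` the parallel classes of `𝓡` are the images of two base classes
under a group of multipliers, automorphisms of `G` scaling by units of `ZMod v`. The multiplier of
`-1` fixes both base classes, so there are at most `v - 1` images, just enough to cover each pair of
points once. Covering and closure under translation need only be checked up to multipliers.
-/

open scoped Pointwise

section Resolution

variable {ι α M : Type*} {k : ℕ} {Y T : Finset α} {P : Finset (Finset α)}
  {𝓡 : Finset (Finset (Finset α))}

/-- A parallel class on `Y` all of whose blocks have `k` points. -/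
structure IsUniformPartition (k : ℕ) (Y : Finset α) (P : Finset (Finset α)) : Prop where
  subset : ∀ T ∈ P, T ⊆ Y
  card_eq : ∀ T ∈ P, #T = k
  existsUnique : ∀ y ∈ Y, ∃! T, T ∈ P ∧ y ∈ T

theorem IsUniformPartition.isParallelClass_map (h : IsUniformPartition k Y P) (e : α ↪ ℕ) :
    IsParallelClass (Y.map e) (P.image (Finset.map e)) := by
  simp only [IsParallelClass, forall_mem_image, forall_mem_map]
  refine ⟨fun T hT => map_subset_map.2 (h.subset T hT), fun y hy => ?_⟩
  obtain ⟨T, ⟨hT, hyT⟩, hunique⟩ := h.existsUnique y hy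
  refine ⟨T.map e, ⟨mem_image_of_mem _ hT, mem_map_of_mem e hyT⟩, ?_⟩
  rintro T' ⟨hT', hyT'⟩
  obtain ⟨T₀, hT₀, rfl⟩ := mem_image.1 hT'
  rw [hunique T₀ ⟨hT₀, (mem_map' e).1 hyT'⟩]

variable [DecidableEq α]

/-- The blocks of a design that is given as a set `𝓡` of parallel classes. -/
def blocksOf (𝓡 : Finset (Finset (Finset α))) : Finset (Finset α) := 𝓡.biUnion id

/-- `𝓡` is a resolution on `Y` with blocks of size `k`: a set of pairwise disjoint parallel
classes. -/
structure IsResolution (k : ℕ) (Y : Finset α) (𝓡 : Finset (Finset (Finset α))) : Prop where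
  isUniformPartition : ∀ P ∈ 𝓡, IsUniformPartition k Y P
  eq_of_mem : ∀ P ∈ 𝓡, ∀ Q ∈ 𝓡, ∀ T ∈ P, T ∈ Q → P = Q

/-- A resolvable Steiner system `S(t, k, #Y)` on `Y`, given by the set `𝓡` of parallel classes of
a resolution. -/
structure IsResolvedSteiner (t k : ℕ) (Y : Finset α) (𝓡 : Finset (Finset (Finset α))) : Prop
    extends IsResolution k Y 𝓡 where
  existsUnique_block : ∀ S ⊆ Y, #S = t → ∃! T, T ∈ blocksOf 𝓡 ∧ S ⊆ T

theorem mem_blocksOf : T ∈ blocksOf 𝓡 ↔ ∃ P ∈ 𝓡, T ∈ P := mem_biUnion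

theorem IsUniformPartition.smul [Group M] [MulAction M α] (h : IsUniformPartition k Y P) (a : M) :
    IsUniformPartition k (a • Y) (a • P) where
  subset T hT := by
    obtain ⟨T₀, hT₀, rfl⟩ := mem_smul_finset.1 hT
    exact smul_finset_subset_smul_finset (h.subset T₀ hT₀)
  card_eq T hT := by
    obtain ⟨T₀, hT₀, rfl⟩ := mem_smul_finset.1 hT
    rw [card_smul_finset, h.card_eq T₀ hT₀]
  existsUnique y hy := by
    obtain ⟨y₀, hy₀, rfl⟩ := mem_smul_finset.1 hy
    obtain ⟨T, ⟨hT, hyT⟩, hunique⟩ := h.existsUnique y₀ hy₀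
    refine ⟨a • T, ⟨smul_mem_smul_finset hT, smul_mem_smul_finset hyT⟩, ?_⟩
    rintro T' ⟨hT', hyT'⟩
    obtain ⟨T₀, hT₀, rfl⟩ := mem_smul_finset.1 hT'
    rw [hunique T₀ ⟨hT₀, (smul_mem_smul_finset_iff a).1 hyT'⟩]

theorem IsResolution.smul [Group M] [MulAction M α] (h : IsResolution k Y 𝓡) (a : M) :
    IsResolution k (a • Y) (a • 𝓡) where
  isUniformPartition P hP := by
    obtain ⟨P₀, hP₀, rfl⟩ := mem_smul_finset.1 hP
    exact (h.isUniformPartition P₀ hP₀).smul a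
  eq_of_mem P hP Q hQ T hTP hTQ := by
    obtain ⟨P₀, hP₀, rfl⟩ := mem_smul_finset.1 hP
    obtain ⟨Q₀, hQ₀, rfl⟩ := mem_smul_finset.1 hQ
    obtain ⟨T₀, hT₀, rfl⟩ := mem_smul_finset.1 hTP
    rw [h.eq_of_mem P₀ hP₀ Q₀ hQ₀ T₀ hT₀ ((smul_mem_smul_finset_iff a).1 hTQ)]

theorem IsResolution.resolvable_map (h : IsResolution k Y 𝓡) (e : α ↪ ℕ) :
    Resolvable (Y.map e) ((blocksOf 𝓡).image (Finset.map e)) := by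
  refine ⟨#𝓡, fun i => (𝓡.equivFin.symm i : Finset (Finset α)).image (Finset.map e),
    fun i => ?_, fun i => ?_, ?_⟩
  · exact (h.isUniformPartition _ (𝓡.equivFin.symm i).2).isParallelClass_map e
  · exact image_subset_image fun T hT => mem_blocksOf.2 ⟨_, (𝓡.equivFin.symm i).2, hT⟩
  · simp only [forall_mem_image, mem_blocksOf]
    rintro T ⟨P, hP, hT⟩
    refine ⟨𝓡.equivFin ⟨P, hP⟩, by simpa using hT, fun i hi => ?_⟩
    obtain ⟨T', hT', hTT'⟩ := mem_image.1 hi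
    rw [map_injective e hTT'] at hT'
    rw [← Equiv.symm_apply_eq]
    exact Subtype.ext (h.eq_of_mem _ (𝓡.equivFin.symm i).2 P hP T hT' hT)

theorem pairwiseDisjoint_of_sum_card_le_card_biUnion {s : Finset ι} {f : ι → Finset α}
    (h : ∑ i ∈ s, #(f i) ≤ #(s.biUnion f)) : (s : Set ι).PairwiseDisjoint f := by
  classical
  intro i hi j hj hij
  have hsplit : s.biUnion f = f i ∪ (s.erase i).biUnion f := by
    rw [← biUnion_insert, insert_erase hi]
  have hrest : #((s.erase i).biUnion f) ≤ ∑ j ∈ s.erase i, #(f j) := card_biUnion_le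
  have hinter := card_union_add_card_inter (f i) ((s.erase i).biUnion f)
  rw [hsplit, ← add_sum_erase s (fun j => #(f j)) hi] at h
  have hdisj : Disjoint (f i) ((s.erase i).biUnion f) := by
    rw [disjoint_iff_inter_eq_empty, ← card_eq_zero]
    lia
  exact (disjoint_biUnion_right ..).1 hdisj j (mem_erase.2 ⟨hij.symm, hj⟩)

/-- The points other than `x` in the blocks of `P` through `x`. -/
def neighbors (P : Finset (Finset α)) (x : α) : Finset α :=
  ((P.filter (x ∈ ·)).biUnion id).erase x

theorem mem_neighbors {x y : α} : y ∈ neighbors P x ↔ y ≠ x ∧ ∃ T ∈ P, x ∈ T ∧ y ∈ T := by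
  simp [neighbors, and_assoc]

theorem IsUniformPartition.card_neighbors (h : IsUniformPartition k Y P) {x : α} (hx : x ∈ Y) :
    #(neighbors P x) = k - 1 := by
  obtain ⟨T, ⟨hT, hxT⟩, hunique⟩ := h.existsUnique x hx
  have hfilter : P.filter (x ∈ ·) = {T} :=
    eq_singleton_iff_unique_mem.2 ⟨mem_filter.2 ⟨hT, hxT⟩,
      fun T' hT' => hunique T' (mem_filter.1 hT')⟩
  rw [neighbors, hfilter, singleton_biUnion, id, card_erase_of_mem hxT, h.card_eq T hT]

-- The neighbourhoods of `x` cover `Y \ {x}` and have together just as many points.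
theorem pairwiseDisjoint_neighbors (hP : ∀ P ∈ 𝓡, IsUniformPartition k Y P)
    (hcard : #𝓡 * (k - 1) < #Y)
    (hcover : ∀ x ∈ Y, ∀ y ∈ Y, x ≠ y → ∃ T ∈ blocksOf 𝓡, x ∈ T ∧ y ∈ T) {x : α} (hx : x ∈ Y) :
    (𝓡 : Set (Finset (Finset α))).PairwiseDisjoint (neighbors · x) := by
  apply pairwiseDisjoint_of_sum_card_le_card_biUnion
  calc ∑ P ∈ 𝓡, #(neighbors P x) = #𝓡 * (k - 1) :=
        sum_const_nat fun P hP' => (hP P hP').card_neighbors hx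
    _ ≤ #(Y.erase x) := by rw [card_erase_of_mem hx]; lia
    _ ≤ #(𝓡.biUnion (neighbors · x)) := card_le_card fun y hy => ?_
  obtain ⟨hyx, hy⟩ := mem_erase.1 hy
  obtain ⟨T, hT, hxT, hyT⟩ := hcover x hx y hy hyx.symm
  obtain ⟨P, hP, hTP⟩ := mem_blocksOf.1 hT
  exact mem_biUnion.2 ⟨P, hP, mem_neighbors.2 ⟨hyx, T, hTP, hxT, hyT⟩⟩

theorem isResolvedSteiner_two_of_card_lt (hP : ∀ P ∈ 𝓡, IsUniformPartition k Y P) (hk : 2 ≤ k)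
    (hcard : #𝓡 * (k - 1) < #Y)
    (hcover : ∀ x ∈ Y, ∀ y ∈ Y, x ≠ y → ∃ T ∈ blocksOf 𝓡, x ∈ T ∧ y ∈ T) :
    IsResolvedSteiner 2 k Y 𝓡 := by
  have class_eq : ∀ P ∈ 𝓡, ∀ Q ∈ 𝓡, ∀ T ∈ P, ∀ T' ∈ Q, ∀ x ∈ T, ∀ y ∈ T, y ≠ x →
      x ∈ T' → y ∈ T' → P = Q := by
    intro P hP' Q hQ T hT T' hT' x hx y hy hyx hx' hy'
    by_contra hPQ
    exact disjoint_left.1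
      (pairwiseDisjoint_neighbors hP hcard hcover ((hP P hP').subset T hT hx) hP' hQ hPQ)
      (mem_neighbors.2 ⟨hyx, T, hT, hx, hy⟩) (mem_neighbors.2 ⟨hyx, T', hT', hx', hy'⟩)
  refine ⟨⟨hP, fun P hP' Q hQ T hT hT' => ?_⟩, fun S hS hS2 => ?_⟩
  · obtain ⟨x, hx, y, hy, hxy⟩ := one_lt_card.1 (hk.trans_eq ((hP P hP').card_eq T hT).symm)
    exact class_eq P hP' Q hQ T hT T hT' x hx y hy hxy.symm hx hy
  · obtain ⟨x, y, hxy, rfl⟩ := card_eq_two.1 hS2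
    simp only [insert_subset_iff, singleton_subset_iff] at hS ⊢
    obtain ⟨T, hT, hxT, hyT⟩ := hcover x hS.1 y hS.2 hxy
    refine ⟨T, ⟨hT, hxT, hyT⟩, ?_⟩
    rintro T' ⟨hT', hxT', hyT'⟩
    obtain ⟨P, hP', hTP⟩ := mem_blocksOf.1 hT
    obtain ⟨Q, hQ, hTQ⟩ := mem_blocksOf.1 hT'
    obtain rfl := class_eq P hP' Q hQ T hTP T' hTQ x hxT y hyT hxy.symm hxT' hyT'
    exact ((hP P hP').existsUnique x hS.1).unique ⟨hTQ, hxT'⟩ ⟨hTP, hxT⟩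

end Resolution

section Development

variable {G : Type*} [Group G] [DecidableEq G] {t k : ℕ} {x : G} {S T b : Finset G}
  {𝓡 : Finset (Finset (Finset G))}

/-- Closure of the sets `insert 1 T`, for `T` a block of `𝓡`, under the left translations that move
one of their points to `1`; it makes their left translates a design whose derived design at `1` is
`𝓡`. -/
def IsDevelopable (𝓡 : Finset (Finset (Finset G))) : Prop :=
  ∀ T ∈ blocksOf 𝓡, ∀ p ∈ T, ∃ T' ∈ blocksOf 𝓡, p⁻¹ • insert 1 T = insert 1 T'

theorem subset_smul_insert_one_iff : S ⊆ x • insert 1 T ↔ (x⁻¹ • S).erase 1 ⊆ T := by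
  rw [subset_smul_finset_iff, subset_insert_iff]

variable [Fintype G]

/-- The left translates of the sets `insert 1 T`, for `T` a block of `𝓡`. -/
def development (𝓡 : Finset (Finset (Finset G))) : Finset (Finset G) :=
  image₂ (fun (x : G) T => x • insert 1 T) univ (blocksOf 𝓡)

theorem mem_development :
    b ∈ development 𝓡 ↔ ∃ x : G, ∃ T ∈ blocksOf 𝓡, x • insert 1 T = b := by
  simp [development]

theorem smul_insert_one_mem_development (x : G) (hT : T ∈ blocksOf 𝓡) :
    x • insert 1 T ∈ development 𝓡 :=
  mem_development.2 ⟨x, T, hT, rfl⟩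

theorem IsDevelopable.exists_eq_smul_insert_one (hd : IsDevelopable 𝓡) (hb : b ∈ development 𝓡)
    (hx : x ∈ b) : ∃ T ∈ blocksOf 𝓡, b = x • insert 1 T := by
  obtain ⟨y, T, hT, rfl⟩ := mem_development.1 hb
  obtain ⟨p, hp, rfl⟩ := mem_smul_finset.1 hx
  obtain rfl | hpT := mem_insert.1 hp
  · exact ⟨T, hT, by rw [smul_eq_mul, mul_one]⟩
  · obtain ⟨T', hT', h⟩ := hd T hT p hpT
    exact ⟨T', hT', by rw [smul_eq_mul, mul_smul, ← h, smul_inv_smul]⟩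

namespace IsResolvedSteiner

theorem one_notMem (h : IsResolvedSteiner t k (univ.erase (1 : G)) 𝓡)
    (hT : T ∈ blocksOf 𝓡) : 1 ∉ T := by
  obtain ⟨P, hP, hTP⟩ := mem_blocksOf.1 hT
  exact fun h1 => ne_of_mem_erase ((h.isUniformPartition P hP).subset T hTP h1) rfl

theorem card_of_mem_development (h : IsResolvedSteiner t k (univ.erase (1 : G)) 𝓡)
    (hb : b ∈ development 𝓡) : #b = k + 1 := by
  obtain ⟨x, T, hT, rfl⟩ := mem_development.1 hb
  obtain ⟨P, hP, hTP⟩ := mem_blocksOf.1 hT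
  rw [card_smul_finset, card_insert_of_notMem (h.one_notMem hT),
    (h.isUniformPartition P hP).card_eq T hTP]

theorem existsUnique_mem_development (h : IsResolvedSteiner t k (univ.erase (1 : G)) 𝓡)
    (hd : IsDevelopable 𝓡) (hS : #S = t + 1) : ∃! b, b ∈ development 𝓡 ∧ S ⊆ b := by
  obtain ⟨x, hx⟩ : S.Nonempty := card_pos.1 (by lia)
  have h1 : 1 ∈ x⁻¹ • S := mem_smul_finset.2 ⟨x, hx, inv_mul_cancel x⟩
  obtain ⟨T, ⟨hT, hST⟩, hunique⟩ := h.existsUnique_block ((x⁻¹ • S).erase 1)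
    (erase_subset_erase 1 (subset_univ _))
    (by rw [card_erase_of_mem h1, card_smul_finset, hS, Nat.add_sub_cancel])
  refine ⟨x • insert 1 T, ⟨smul_insert_one_mem_development x hT,
    subset_smul_insert_one_iff.2 hST⟩, ?_⟩
  rintro b ⟨hb, hSb⟩
  obtain ⟨T', hT', rfl⟩ := hd.exists_eq_smul_insert_one hb (hSb hx)
  rw [hunique T' ⟨hT', subset_smul_insert_one_iff.1 hSb⟩]

theorem image_erase_development (h : IsResolvedSteiner t k (univ.erase (1 : G)) 𝓡)
    (hd : IsDevelopable 𝓡) (x : G) :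
    ((development 𝓡).filter (x ∈ ·)).image (·.erase x) = blocksOf (x • 𝓡) := by
  have erase_eq : ∀ T ∈ blocksOf 𝓡, (x • insert 1 T).erase x = x • T := fun T hT => by
    rw [smul_finset_insert, smul_eq_mul, mul_one, erase_insert]
    simpa [mem_smul_finset] using h.one_notMem hT
  ext B
  simp only [mem_image, mem_filter, mem_blocksOf]
  constructor
  · rintro ⟨b, ⟨hb, hx⟩, rfl⟩
    obtain ⟨T, hT, rfl⟩ := hd.exists_eq_smul_insert_one hb hx
    obtain ⟨P, hP, hTP⟩ := mem_blocksOf.1 hT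
    exact ⟨x • P, smul_mem_smul_finset hP, erase_eq T hT ▸ smul_mem_smul_finset hTP⟩
  · rintro ⟨P, hP, hB⟩
    obtain ⟨P₀, hP₀, rfl⟩ := mem_smul_finset.1 hP
    obtain ⟨T, hT, rfl⟩ := mem_smul_finset.1 hB
    have hT' : T ∈ blocksOf 𝓡 := mem_blocksOf.2 ⟨P₀, hP₀, hT⟩
    refine ⟨x • insert 1 T, ⟨smul_insert_one_mem_development x hT', ?_⟩, erase_eq T hT'⟩
    exact mem_smul_finset.2 ⟨1, mem_insert_self 1 T, mul_one x⟩

theorem resolvable_derivedBlocks_development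
    (h : IsResolvedSteiner t k (univ.erase (1 : G)) 𝓡) (hd : IsDevelopable 𝓡) (e : G ↪ ℕ)
    (x : G) : Resolvable ((univ.map e).erase (e x))
      (derivedBlocks ((development 𝓡).image (Finset.map e)) (e x)) := by
  have hpoints : (univ.map e).erase (e x) = (x • univ.erase (1 : G)).map e := by
    rw [← map_erase, erase_eq, erase_eq, smul_finset_sdiff, smul_finset_univ,
      smul_finset_singleton, smul_eq_mul, mul_one]
  have hblocks : derivedBlocks ((development 𝓡).image (Finset.map e)) (e x) =
      (blocksOf (x • 𝓡)).image (Finset.map e) := by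
    rw [← h.image_erase_development hd x, derivedBlocks, filter_image, image_image, image_image]
    simp only [mem_map', Function.comp_def, map_erase]
  rw [hpoints, hblocks]
  exact (h.toIsResolution.smul x).resolvable_map e

theorem existsRDS (h : IsResolvedSteiner t k (univ.erase (1 : G)) 𝓡)
    (hd : IsDevelopable 𝓡) : ExistsRDS (t + 1) (k + 1) (Fintype.card G) := by
  let e : G ↪ ℕ := (Fintype.equivFin G).toEmbedding.trans Fin.valEmbedding
  refine ⟨univ.map e, (development 𝓡).image (Finset.map e), ⟨card_map e, ?_, ?_⟩, ?_⟩
  · simp only [forall_mem_image, card_map]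
    exact fun b hb => ⟨map_subset_map.2 (subset_univ b), h.card_of_mem_development hb⟩
  · intro S' hS' hcard
    obtain ⟨S, -, rfl⟩ := subset_map_iff.1 hS'
    obtain ⟨b, ⟨hb, hSb⟩, hunique⟩ :=
      h.existsUnique_mem_development hd ((card_map e).symm.trans hcard)
    refine ⟨b.map e, ⟨mem_image_of_mem _ hb, map_subset_map.2 hSb⟩, ?_⟩
    rintro b' ⟨hb', hSb'⟩
    obtain ⟨b₀, hb₀, rfl⟩ := mem_image.1 hb'
    rw [hunique b₀ ⟨hb₀, map_subset_map.1 hSb'⟩]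
  · simp only [forall_mem_map]
    exact fun x _ => h.resolvable_derivedBlocks_development hd e x

end IsResolvedSteiner

end Development

section Multipliers

variable {G M U : Type*} [Group G] [DecidableEq G] [Group M] [MulDistribMulAction M G]
  {𝓡 : Finset (Finset (Finset G))} {T : Finset G}

theorem smul_smul_insert_one (a : M) (x : G) (T : Finset G) :
    a • x • insert 1 T = (a • x) • insert 1 (a • T) := by
  have smul_comm : ∀ S : Finset G, a • x • S = (a • x) • a • S := fun S => by
    simp only [smul_finset_def, image_image, Function.comp_def, smul_eq_mul, smul_mul']
  rw [smul_comm, smul_finset_insert, smul_one]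

theorem smul_mem_blocksOf (h𝓡 : ∀ a : M, ∀ P ∈ 𝓡, a • P ∈ 𝓡) (a : M) (hT : T ∈ blocksOf 𝓡) :
    a • T ∈ blocksOf 𝓡 := by
  obtain ⟨P, hP, hTP⟩ := mem_blocksOf.1 hT
  exact mem_blocksOf.2 ⟨a • P, h𝓡 a P hP, smul_mem_smul_finset hTP⟩

theorem exists_mem_blocksOf_of_smul (h𝓡 : ∀ a : M, ∀ P ∈ 𝓡, a • P ∈ 𝓡) {p q : G} (a : M)
    (h : ∃ T ∈ blocksOf 𝓡, a • p ∈ T ∧ a • q ∈ T) : ∃ T ∈ blocksOf 𝓡, p ∈ T ∧ q ∈ T := by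
  obtain ⟨T, hT, hpT, hqT⟩ := h
  exact ⟨a⁻¹ • T, smul_mem_blocksOf h𝓡 a⁻¹ hT, mem_inv_smul_finset_iff.2 hpT,
    mem_inv_smul_finset_iff.2 hqT⟩

theorem isDevelopable_of_exists_smul (h𝓡 : ∀ a : M, ∀ P ∈ 𝓡, a • P ∈ 𝓡)
    (h : ∀ T ∈ blocksOf 𝓡, ∀ p ∈ T,
      ∃ a : M, ∃ T' ∈ blocksOf 𝓡, a • p⁻¹ • insert 1 T = insert 1 T') :
    IsDevelopable 𝓡 := by
  intro T hT p hp
  obtain ⟨a, T', hT', haT'⟩ := h T hT p hp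
  refine ⟨a⁻¹ • T', smul_mem_blocksOf h𝓡 a⁻¹ hT', ?_⟩
  rw [← inv_smul_smul a (p⁻¹ • insert 1 T), haT', smul_finset_insert, smul_one]

theorem two_mul_card_univ_smul_le {β : Type*} [MulAction M β] [DecidableEq β] [Group U] [Fintype U]
    [Fintype M] {f : U →* M} (hf : Function.Surjective f) {z : U} (hz : z ≠ 1) {𝓒 : Finset β}
    (hz𝓒 : ∀ C ∈ 𝓒, f z • C = C) : 2 * #((univ : Finset M) • 𝓒) ≤ Fintype.card U * #𝓒 := by
  have himage : (univ : Finset M) • 𝓒 = (univ ×ˢ 𝓒).image fun x : U × β => f x.1 • x.2 := by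
    ext C
    simp only [mem_smul, mem_univ, true_and, mem_image, mem_product, Prod.exists, hf.exists]
  rw [himage, ← card_univ, ← card_product]
  refine mul_card_image_le_card _ 2 fun C hC => ?_
  obtain ⟨⟨x, C₀⟩, hx, rfl⟩ := mem_image.1 hC
  refine one_lt_card.2 ⟨(x, C₀), by simpa using hx, (x * z, C₀), ?_, by simpa using hz⟩
  have hC₀ : C₀ ∈ 𝓒 := (mem_product.1 hx).2
  simp [hC₀, mul_smul, hz𝓒 C₀ hC₀]

end Multipliers

section DihedralLabels

open DihedralGroup

variable {n : ℕ}

/-- Units of `ZMod n` act on the dihedral group by scaling the angles `i` of the rotations `r i`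
and of the reflections `sr i`. -/
instance : MulDistribMulAction (ZMod n)ˣ (DihedralGroup n) where
  smul
    | u, r i => r (u * i)
    | u, sr i => sr (u * i)
  one_smul := by rintro (i | i) <;> simp [HSMul.hSMul]
  mul_smul u v := by rintro (i | i) <;> simp [HSMul.hSMul, mul_assoc]
  smul_mul u := by rintro (i | i) (j | j) <;> simp [HSMul.hSMul, mul_add, mul_sub]
  smul_one u := congrArg r (mul_zero (u : ZMod n))

theorem units_smul_r (u : (ZMod n)ˣ) (i : ZMod n) : u • r i = r ((u : ZMod n) * i) := rfl

theorem units_smul_sr (u : (ZMod n)ˣ) (i : ZMod n) : u • sr i = sr ((u : ZMod n) * i) := rfl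

/-- The dihedral group of order `2 * n` numbered by `0, …, 2 * n - 1`: first the rotations, then
the reflections. -/
def label (n p : ℕ) : DihedralGroup n := if p < n then r p else sr p

/-- The action of the unit `u` of `ZMod n`, on labels. -/
def scaleLabel (n u p : ℕ) : ℕ := u * p % n + n * (p / n)

/-- The left quotient `g⁻¹ * h`, on labels; modulo `n`, `(n - 1) * p` stands for `-p`. -/
def divLabel (n p q : ℕ) : ℕ :=
  if p < n ↔ q < n then (q + (n - 1) * p) % n else (p + q) % n + n

theorem label_of_lt {p : ℕ} (hp : p < n) : label n p = r (p : ZMod n) := if_pos hp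

theorem label_of_le {p : ℕ} (hp : n ≤ p) : label n p = sr (p : ZMod n) := if_neg hp.not_gt

theorem label_zero [NeZero n] : label n 0 = 1 := by
  rw [label_of_lt (NeZero.pos n), Nat.cast_zero, r_zero]

theorem label_self : label n n = sr 0 := by
  rw [label_of_le le_rfl, ZMod.natCast_self]

theorem exists_label_eq [NeZero n] {g : DihedralGroup n} (hg : g ≠ 1) :
    ∃ p ∈ List.range' 1 (2 * n - 1), label n p = g := by
  simp only [List.mem_range'_1]
  rcases g with i | i
  · have hi : i.val ≠ 0 := fun h => hg (by rw [(ZMod.val_eq_zero i).1 h, r_zero])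
    have hlt := ZMod.val_lt i
    exact ⟨i.val, by lia, by rw [label_of_lt hlt, ZMod.natCast_zmod_val]⟩
  · have hlt := ZMod.val_lt i
    refine ⟨n + i.val, by lia, ?_⟩
    rw [label_of_le (n.le_add_right _), Nat.cast_add, ZMod.natCast_self, zero_add,
      ZMod.natCast_zmod_val]

theorem label_injOn : Set.InjOn (label n) (Set.Iio (2 * n)) := by
  intro p hp q hq h
  rw [Set.mem_Iio] at hp hq
  rcases lt_or_ge p n with hpn | hpn <;> rcases lt_or_ge q n with hqn | hqn
  · rw [label_of_lt hpn, label_of_lt hqn, r.injEq, ZMod.natCast_eq_natCast_iff',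
      Nat.mod_eq_of_lt hpn, Nat.mod_eq_of_lt hqn] at h
    exact h
  · simp [label_of_lt hpn, label_of_le hqn] at h
  · simp [label_of_le hpn, label_of_lt hqn] at h
  · rw [label_of_le hpn, label_of_le hqn, sr.injEq, ZMod.natCast_eq_natCast_iff',
      Nat.mod_eq_sub_mod hpn, Nat.mod_eq_sub_mod hqn, Nat.mod_eq_of_lt (by lia),
      Nat.mod_eq_of_lt (by lia)] at h
    lia

theorem scaleLabel_lt [NeZero n] (u : ℕ) {p : ℕ} (hp : p < n) : scaleLabel n u p < n := by
  rw [scaleLabel, Nat.div_eq_of_lt hp, mul_zero, add_zero]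
  exact Nat.mod_lt _ (NeZero.pos n)

theorem le_scaleLabel [NeZero n] (u : ℕ) {p : ℕ} (hp : n ≤ p) : n ≤ scaleLabel n u p :=
  (Nat.le_mul_of_pos_right n (Nat.div_pos hp (NeZero.pos n))).trans (Nat.le_add_left _ _)

theorem label_scaleLabel [NeZero n] {u : ℕ} {x : (ZMod n)ˣ} (hx : (x : ZMod n) = u) (p : ℕ) :
    label n (scaleLabel n u p) = x • label n p := by
  have hcast : (scaleLabel n u p : ZMod n) = x * p := by simp [scaleLabel, hx]
  rcases lt_or_ge p n with hp | hp
  · rw [label_of_lt (scaleLabel_lt u hp), label_of_lt hp, units_smul_r, hcast]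
  · rw [label_of_le (le_scaleLabel u hp), label_of_le hp, units_smul_sr, hcast]

theorem label_divLabel [NeZero n] (p q : ℕ) :
    label n (divLabel n p q) = (label n p)⁻¹ * label n q := by
  have hpos := NeZero.pos n
  have hneg : ((n - 1 : ℕ) : ZMod n) = -1 := by rw [Nat.cast_pred hpos]; simp
  have hrot := Nat.mod_lt (q + (n - 1) * p) hpos
  rcases lt_or_ge p n with hp | hp <;> rcases lt_or_ge q n with hq | hq
  · rw [divLabel, if_pos (by lia), label_of_lt hrot, label_of_lt hp, label_of_lt hq]
    simp [hneg, add_comm]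
  · rw [divLabel, if_neg (by lia), label_of_le (by lia), label_of_lt hp, label_of_le hq]
    simp [add_comm]
  · rw [divLabel, if_neg (by lia), label_of_le (by lia), label_of_le hp, label_of_lt hq]
    simp
  · rw [divLabel, if_pos (by lia), label_of_lt hrot, label_of_le hp, label_of_le hq]
    simp [hneg, sub_eq_add_neg]

theorem exists_unit_eq_natCast [Fact n.Prime] {p : ℕ} (hp : p ∈ List.range' 1 (2 * n - 1))
    (hpn : p ≠ n) : ∃ x : (ZMod n)ˣ, (x : ZMod n) = p := by
  rw [List.mem_range'_1] at hp
  refine ⟨Units.mk0 (p : ZMod n) fun h => hpn ?_, rfl⟩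
  obtain ⟨k, rfl⟩ := (ZMod.natCast_eq_zero_iff p n).1 h
  have hk : k < 2 := Nat.lt_of_mul_lt_mul_left (a := n) (by lia)
  interval_cases k
  · simp at hp
  · exact mul_one n

end DihedralLabels

section LabelLists

/-- A list of natural numbers as a bit set, which the kernel compares in one step. -/
def bitset : List ℕ → ℕ
  | [] => 0
  | p :: l => 2 ^ p ||| bitset l

theorem testBit_bitset (l : List ℕ) (q : ℕ) : (bitset l).testBit q = decide (q ∈ l) := by
  induction l with
  | nil => simp [bitset]
  | cons p l ih => simp [bitset, ih, Nat.testBit_two_pow, eq_comm]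

theorem mem_iff_of_bitset_eq {l l' : List ℕ} (h : bitset l = bitset l') (q : ℕ) :
    q ∈ l ↔ q ∈ l' := by
  rw [← decide_eq_decide, ← testBit_bitset, h, testBit_bitset]

theorem isUniformPartition_toFinset {α : Type*} [DecidableEq α] {k : ℕ} {Y : Finset α}
    {C : List (List α)} (hnodup : C.flatten.Nodup) (hmem : ∀ y, y ∈ C.flatten ↔ y ∈ Y)
    (hlength : ∀ t ∈ C, t.length = k) :
    IsUniformPartition k Y (C.map List.toFinset).toFinset := by
  obtain ⟨hblocks, hdisjoint⟩ := List.nodup_flatten.1 hnodup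
  have block_eq : ∀ t ∈ C, ∀ t' ∈ C, ∀ y ∈ t, y ∈ t' → t = t' := by
    intro t ht t' ht' y hy hy'
    by_contra htt'
    have : Std.Symm (List.Disjoint (α := α)) := ⟨fun _ _ h => h.symm⟩
    exact hdisjoint.forall ht ht' htt' hy hy'
  refine ⟨?_, ?_, fun y hy => ?_⟩
  · simp only [List.mem_toFinset, List.forall_mem_map]
    exact fun t ht y hy => (hmem y).1 (List.mem_flatten.2 ⟨t, ht, List.mem_toFinset.1 hy⟩)
  · simp only [List.mem_toFinset, List.forall_mem_map]
    exact fun t ht => (List.toFinset_card_of_nodup (hblocks t ht)).trans (hlength t ht)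
  · obtain ⟨t, ht, hyt⟩ := List.mem_flatten.1 ((hmem y).2 hy)
    refine ⟨t.toFinset, by simpa using ⟨⟨t, ht, rfl⟩, hyt⟩, ?_⟩
    simp only [List.mem_toFinset, List.mem_map]
    rintro _ ⟨⟨t', ht', rfl⟩, hyt'⟩
    rw [block_eq t ht t' ht' y hyt (List.mem_toFinset.1 hyt')]

variable {n u : ℕ} {t t' : List ℕ}

/-- The set of group elements with labels in `t`. -/
def labelSet (n : ℕ) (t : List ℕ) : Finset (DihedralGroup n) := (t.map (label n)).toFinset

/-- The class whose blocks have their labels listed in `C`. -/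
def labelClass (n : ℕ) (C : List (List ℕ)) : Finset (Finset (DihedralGroup n)) :=
  (C.map (labelSet n)).toFinset

theorem mem_labelSet {g : DihedralGroup n} : g ∈ labelSet n t ↔ ∃ p ∈ t, label n p = g := by
  simp [labelSet]

theorem label_mem_labelSet {p : ℕ} (hp : p ∈ t) : label n p ∈ labelSet n t :=
  mem_labelSet.2 ⟨p, hp, rfl⟩

theorem mem_labelClass {C : List (List ℕ)} {T : Finset (DihedralGroup n)} :
    T ∈ labelClass n C ↔ ∃ t ∈ C, labelSet n t = T := by
  simp [labelClass]

theorem labelSet_eq_of_bitset_eq (h : bitset t = bitset t') : labelSet n t = labelSet n t' := by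
  ext g
  simp only [mem_labelSet, mem_iff_of_bitset_eq h]

theorem labelSet_zero_cons [NeZero n] : labelSet n (0 :: t) = insert 1 (labelSet n t) := by
  simp [labelSet, label_zero]

theorem labelSet_map_scaleLabel [NeZero n] {x : (ZMod n)ˣ} (hx : (x : ZMod n) = u)
    (t : List ℕ) : labelSet n (t.map (scaleLabel n u)) = x • labelSet n t := by
  ext g
  simp [mem_labelSet, mem_smul_finset, label_scaleLabel hx]

theorem labelSet_map_divLabel [NeZero n] (p : ℕ) (t : List ℕ) :
    labelSet n (t.map (divLabel n p)) = (label n p)⁻¹ • labelSet n t := by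
  ext g
  simp [mem_labelSet, mem_smul_finset, label_divLabel]

theorem smul_labelClass_eq [NeZero n] {x : (ZMod n)ˣ} (hx : (x : ZMod n) = u)
    {C : List (List ℕ)}
    (h : ∀ t ∈ C, ∃ t' ∈ C, bitset (t.map (scaleLabel n u)) = bitset t') :
    x • labelClass n C = labelClass n C := by
  refine eq_of_subset_of_card_le (fun T hT => ?_) (card_smul_finset x _).ge
  obtain ⟨T₀, hT₀, rfl⟩ := mem_smul_finset.1 hT
  obtain ⟨t, ht, rfl⟩ := mem_labelClass.1 hT₀
  obtain ⟨t', ht', htt'⟩ := h t ht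
  rw [← labelSet_map_scaleLabel hx, labelSet_eq_of_bitset_eq htt']
  exact mem_labelClass.2 ⟨t', ht', rfl⟩

theorem isUniformPartition_labelClass [NeZero n] {k : ℕ} {C : List (List ℕ)}
    (hperm : C.flatten.Perm (List.range' 1 (2 * n - 1))) (hlength : ∀ t ∈ C, t.length = k) :
    IsUniformPartition k (univ.erase 1) (labelClass n C) := by
  have lt_two_mul : ∀ p ∈ List.range' 1 (2 * n - 1), p < 2 * n := by
    simp only [List.mem_range'_1]
    lia
  have hflatten : (C.map (List.map (label n))).flatten.Perm
      ((List.range' 1 (2 * n - 1)).map (label n)) := by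
    rw [← List.map_flatten]
    exact hperm.map _
  have hpart := isUniformPartition_toFinset (k := k) (Y := univ.erase 1)
    (hflatten.nodup_iff.2 ((List.nodup_range').map_on fun p hp q hq h =>
      label_injOn (lt_two_mul p hp) (lt_two_mul q hq) h)) ?_ (by simpa using hlength)
  · rw [List.map_map] at hpart
    exact hpart
  · intro g
    simp only [hflatten.mem_iff, List.mem_map, mem_erase, mem_univ, and_true]
    refine ⟨?_, exists_label_eq⟩
    rintro ⟨p, hp, rfl⟩ h
    rw [← label_zero] at h
    have hp0 := label_injOn (lt_two_mul p hp) (Set.mem_Iio.2 (by have := NeZero.pos n; lia)) h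
    simp [hp0] at hp

end LabelLists

section BaseFamilies

variable {n e : ℕ} {𝓒 : List (List (List ℕ))}

/-- The group of `e`-th powers in `(ZMod n)ˣ`, acting on the dihedral group by multipliers. -/
abbrev multiplierGroup (n e : ℕ) : Subgroup (ZMod n)ˣ :=
  (powMonoidHom e : (ZMod n)ˣ →* (ZMod n)ˣ).range

/-- The multiplier `x ^ e` attached to a unit `x`. -/
def multiplier (n e : ℕ) : (ZMod n)ˣ →* multiplierGroup n e :=
  (powMonoidHom e : (ZMod n)ˣ →* (ZMod n)ˣ).rangeRestrict

theorem multiplier_surjective (n e : ℕ) : Function.Surjective (multiplier n e) :=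
  MonoidHom.rangeRestrict_surjective _

theorem label_scaleLabel_pow [NeZero n] {x : (ZMod n)ˣ} {u : ℕ} (hx : (x : ZMod n) = u) (p : ℕ) :
    label n (scaleLabel n (u ^ e) p) = multiplier n e x • label n p :=
  label_scaleLabel (x := x ^ e) (u := u ^ e) (by simp [hx]) p

theorem labelSet_map_scaleLabel_pow [NeZero n] {x : (ZMod n)ˣ} {u : ℕ} (hx : (x : ZMod n) = u)
    (t : List ℕ) : labelSet n (t.map (scaleLabel n (u ^ e))) = multiplier n e x • labelSet n t :=
  labelSet_map_scaleLabel (x := x ^ e) (u := u ^ e) (by simp [hx]) t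

/-- The labels `≠ 0`, each moved by its own multiplier. -/
def normalizedLabels (n e : ℕ) : List ℕ :=
  ((List.range' 1 (2 * n - 1)).map fun s => scaleLabel n (s ^ e) s).dedup

/-- The blocks of `𝓒`, each moved by the multipliers of its points other than `n`, the label of
`sr 0`. -/
def normalizedBlocks (n e : ℕ) (𝓒 : List (List (List ℕ))) : List (List ℕ) :=
  𝓒.flatten.flatMap fun t => (t.filter (· ≠ n)).map fun s => t.map (scaleLabel n (s ^ e))

/-- Two parallel classes of labelled triples whose images under `multiplierGroup n e` are the
parallel classes of a developable Kirkman triple system on the non-identity elements of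
`DihedralGroup n`, as conditions on the normalized points and blocks that can be checked by
evaluation. -/
structure IsBaseFamily (n e : ℕ) (𝓒 : List (List (List ℕ))) : Prop where
  length_eq : 𝓒.length = 2
  length_block : ∀ C ∈ 𝓒, ∀ t ∈ C, t.length = 3
  perm_flatten : ∀ C ∈ 𝓒, C.flatten.Perm (List.range' 1 (2 * n - 1))
  neg_block : ∀ C ∈ 𝓒, ∀ t ∈ C,
    ∃ t' ∈ C, bitset (t.map (scaleLabel n ((n - 1) ^ e))) = bitset t'
  cover : ∀ p ∈ normalizedLabels n e, p ≠ n →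
    bitset ((normalizedBlocks n e 𝓒).filter (p ∈ ·)).flatten =
      bitset (List.range' 1 (2 * n - 1))
  develop : ∀ t ∈ normalizedBlocks n e 𝓒, ∀ p ∈ normalizedLabels n e, p ∈ t → ∃ u ∈ [1, n - 1],
    bitset (((0 :: t).map (divLabel n p)).map (scaleLabel n (u ^ e))) ∈
      (normalizedBlocks n e 𝓒).map fun t' => bitset (0 :: t')

/-- The images of the classes listed in `𝓒` under `multiplierGroup n e`. -/
def multiplierOrbit (n e : ℕ) [NeZero n] (𝓒 : List (List (List ℕ))) :
    Finset (Finset (Finset (DihedralGroup n))) :=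
  (univ : Finset (multiplierGroup n e)) • (𝓒.map (labelClass n)).toFinset

theorem mem_multiplierOrbit [NeZero n] {P : Finset (Finset (DihedralGroup n))} :
    P ∈ multiplierOrbit n e 𝓒 ↔ ∃ a : multiplierGroup n e, ∃ C ∈ 𝓒, a • labelClass n C = P := by
  simp only [multiplierOrbit, mem_smul, mem_univ, true_and, List.mem_toFinset, List.mem_map,
    exists_exists_and_eq_and]

theorem smul_mem_multiplierOrbit [NeZero n] (a : multiplierGroup n e) :
    ∀ P ∈ multiplierOrbit n e 𝓒, a • P ∈ multiplierOrbit n e 𝓒 := by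
  intro P hP
  obtain ⟨b, C, hC, rfl⟩ := mem_multiplierOrbit.1 hP
  exact mem_multiplierOrbit.2 ⟨a * b, C, hC, mul_smul a b _⟩

theorem mem_blocksOf_multiplierOrbit [NeZero n] {T : Finset (DihedralGroup n)} :
    T ∈ blocksOf (multiplierOrbit n e 𝓒) ↔
      ∃ a : multiplierGroup n e, ∃ C ∈ 𝓒, ∃ t ∈ C, a • labelSet n t = T := by
  simp only [mem_blocksOf, mem_multiplierOrbit]
  constructor
  · rintro ⟨_, ⟨a, C, hC, rfl⟩, hT⟩
    obtain ⟨_, hT₀, rfl⟩ := mem_smul_finset.1 hT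
    obtain ⟨t, ht, rfl⟩ := mem_labelClass.1 hT₀
    exact ⟨a, C, hC, t, ht, rfl⟩
  · rintro ⟨a, C, hC, t, ht, rfl⟩
    exact ⟨_, ⟨a, C, hC, rfl⟩, smul_mem_smul_finset (mem_labelClass.2 ⟨t, ht, rfl⟩)⟩

theorem mem_normalizedBlocks {t' : List ℕ} :
    t' ∈ normalizedBlocks n e 𝓒 ↔
      ∃ C ∈ 𝓒, ∃ t ∈ C, ∃ s ∈ t, s ≠ n ∧ t.map (scaleLabel n (s ^ e)) = t' := by
  simp only [normalizedBlocks, List.mem_flatMap, List.mem_flatten, List.mem_map, List.mem_filter,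
    decide_eq_true_eq]
  grind

theorem mem_normalizedLabels {s : ℕ} (hs : s ∈ List.range' 1 (2 * n - 1)) :
    scaleLabel n (s ^ e) s ∈ normalizedLabels n e :=
  List.mem_dedup.2 (List.mem_map.2 ⟨s, hs, rfl⟩)

namespace IsBaseFamily

theorem mem_range'_of_mem (h : IsBaseFamily n e 𝓒) {C : List (List ℕ)} (hC : C ∈ 𝓒)
    {t : List ℕ} (ht : t ∈ C) {s : ℕ} (hs : s ∈ t) : s ∈ List.range' 1 (2 * n - 1) :=
  (h.perm_flatten C hC).mem_iff.1 (List.mem_flatten.2 ⟨t, ht, hs⟩)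

theorem exists_mem_normalizedLabels [NeZero n] (h : IsBaseFamily n e 𝓒) {C : List (List ℕ)}
    (hC : C ∈ 𝓒) {t : List ℕ} (ht : t ∈ C) {s : ℕ} (hs : s ∈ t) :
    ∃ s' ∈ t, s' ≠ n ∧ scaleLabel n (s' ^ e) s ∈ normalizedLabels n e := by
  have hrange := h.mem_range'_of_mem hC ht hs
  obtain rfl | hsn := eq_or_ne s n
  · have scale_self (u : ℕ) : scaleLabel s u s = s := by
      simp [scaleLabel, Nat.div_self (NeZero.pos s)]
    obtain ⟨s', hs', hne⟩ : ∃ s' ∈ t, s' ≠ s := by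
      by_contra! hall
      have hnodup : t.Nodup := (List.nodup_flatten.1
        ((h.perm_flatten C hC).nodup_iff.2 List.nodup_range')).1 t ht
      rw [List.eq_replicate_of_mem hall, h.length_block C hC t ht] at hnodup
      simp at hnodup
    refine ⟨s', hs', hne, ?_⟩
    have hmem := mem_normalizedLabels (e := e) hrange
    rwa [scale_self] at hmem ⊢
  · exact ⟨s, hs, hsn, mem_normalizedLabels hrange⟩

variable [Fact n.Prime]

theorem labelSet_mem_blocksOf (h : IsBaseFamily n e 𝓒) {t : List ℕ}
    (ht : t ∈ normalizedBlocks n e 𝓒) : labelSet n t ∈ blocksOf (multiplierOrbit n e 𝓒) := by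
  obtain ⟨C, hC, t₀, ht₀, s, hs, hsn, rfl⟩ := mem_normalizedBlocks.1 ht
  obtain ⟨x, hx⟩ := exists_unit_eq_natCast (h.mem_range'_of_mem hC ht₀ hs) hsn
  exact mem_blocksOf_multiplierOrbit.2
    ⟨multiplier n e x, C, hC, t₀, ht₀, (labelSet_map_scaleLabel_pow hx t₀).symm⟩

theorem exists_smul_eq_labelSet (h : IsBaseFamily n e 𝓒) {T : Finset (DihedralGroup n)}
    (hT : T ∈ blocksOf (multiplierOrbit n e 𝓒)) {g : DihedralGroup n} (hg : g ∈ T) :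
    ∃ a : multiplierGroup n e, ∃ t ∈ normalizedBlocks n e 𝓒, ∃ p ∈ normalizedLabels n e,
      p ∈ t ∧ a • T = labelSet n t ∧ a • g = label n p := by
  obtain ⟨b, C, hC, t, ht, rfl⟩ := mem_blocksOf_multiplierOrbit.1 hT
  obtain ⟨g₀, hg₀, rfl⟩ := mem_smul_finset.1 hg
  obtain ⟨s, hs, rfl⟩ := mem_labelSet.1 hg₀
  obtain ⟨s', hs', hne, hp⟩ := h.exists_mem_normalizedLabels hC ht hs
  obtain ⟨x, hx⟩ := exists_unit_eq_natCast (h.mem_range'_of_mem hC ht hs') hne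
  refine ⟨multiplier n e x * b⁻¹, t.map (scaleLabel n (s' ^ e)),
    mem_normalizedBlocks.2 ⟨C, hC, t, ht, s', hs', hne, rfl⟩, scaleLabel n (s' ^ e) s, hp,
    List.mem_map_of_mem hs, ?_, ?_⟩
  · rw [mul_smul, inv_smul_smul, labelSet_map_scaleLabel_pow hx]
  · rw [mul_smul, inv_smul_smul, label_scaleLabel_pow hx]

theorem isDevelopable (h : IsBaseFamily n e 𝓒) : IsDevelopable (multiplierOrbit n e 𝓒) := by
  refine isDevelopable_of_exists_smul (M := multiplierGroup n e) smul_mem_multiplierOrbit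
    fun T hT g hg => ?_
  obtain ⟨a, t, ht, p, hp, hpt, haT, hag⟩ := h.exists_smul_eq_labelSet hT hg
  obtain ⟨u, hu, hmem⟩ := h.develop t ht p hp hpt
  obtain ⟨t', ht', hbits⟩ := List.mem_map.1 hmem
  obtain ⟨x, hx⟩ : ∃ x : (ZMod n)ˣ, (x : ZMod n) = u := by
    have hn := (Fact.out : n.Prime).two_le
    apply exists_unit_eq_natCast <;> grind
  refine ⟨multiplier n e x * a, labelSet n t', h.labelSet_mem_blocksOf ht', ?_⟩
  calc (multiplier n e x * a) • g⁻¹ • insert 1 T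
      = multiplier n e x • (label n p)⁻¹ • labelSet n (0 :: t) := by
        rw [mul_smul, smul_smul_insert_one, smul_inv', hag, haT, labelSet_zero_cons]
    _ = labelSet n (((0 :: t).map (divLabel n p)).map (scaleLabel n (u ^ e))) := by
        rw [labelSet_map_scaleLabel_pow hx, labelSet_map_divLabel]
    _ = insert 1 (labelSet n t') := by
        rw [labelSet_eq_of_bitset_eq hbits.symm, labelSet_zero_cons]

theorem exists_block_of_ne_sr_zero (h : IsBaseFamily n e 𝓒) {g g' : DihedralGroup n} (hg : g ≠ 1)
    (hg' : g' ≠ 1) (hgr : g ≠ .sr 0) :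
    ∃ T ∈ blocksOf (multiplierOrbit n e 𝓒), g ∈ T ∧ g' ∈ T := by
  obtain ⟨s, hs, rfl⟩ := exists_label_eq hg
  have hsn : s ≠ n := fun hsn => hgr (hsn ▸ label_self)
  obtain ⟨x, hx⟩ := exists_unit_eq_natCast hs hsn
  have hne : scaleLabel n (s ^ e) s ≠ n := fun heq => hgr <| by
    rw [← smul_left_cancel_iff (multiplier n e x), ← label_scaleLabel_pow hx, heq, label_self]
    exact (congrArg DihedralGroup.sr (mul_zero _)).symm
  obtain ⟨q, hq, hqg'⟩ : ∃ q ∈ List.range' 1 (2 * n - 1), label n q = multiplier n e x • g' :=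
    exists_label_eq fun heq => hg' (smul_left_cancel _ (heq.trans (smul_one _).symm))
  have hcover := h.cover _ (mem_normalizedLabels hs) hne
  obtain ⟨t, ht, hqt⟩ := List.mem_flatten.1 ((mem_iff_of_bitset_eq hcover q).2 hq)
  rw [List.mem_filter, decide_eq_true_eq] at ht
  refine exists_mem_blocksOf_of_smul smul_mem_multiplierOrbit (multiplier n e x)
    ⟨labelSet n t, h.labelSet_mem_blocksOf ht.1, ?_, ?_⟩
  · exact label_scaleLabel_pow hx s ▸ label_mem_labelSet ht.2
  · exact hqg' ▸ label_mem_labelSet hqt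

theorem exists_block (h : IsBaseFamily n e 𝓒) {g g' : DihedralGroup n} (hg : g ≠ 1)
    (hg' : g' ≠ 1) (hgg' : g ≠ g') :
    ∃ T ∈ blocksOf (multiplierOrbit n e 𝓒), g ∈ T ∧ g' ∈ T := by
  by_cases hgr : g = .sr 0
  · obtain ⟨T, hT, hg'T, hgT⟩ :=
      h.exists_block_of_ne_sr_zero hg' hg fun hg'r => hgg' (hgr.trans hg'r.symm)
    exact ⟨T, hT, hgT, hg'T⟩
  · exact h.exists_block_of_ne_sr_zero hg hg' hgr

theorem isUniformPartition (h : IsBaseFamily n e 𝓒) :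
    ∀ P ∈ multiplierOrbit n e 𝓒, IsUniformPartition 3 (univ.erase 1) P := by
  intro P hP
  obtain ⟨a, C, hC, rfl⟩ := mem_multiplierOrbit.1 hP
  have hsmul : a • univ.erase (1 : DihedralGroup n) = univ.erase 1 := by
    rw [erase_eq, smul_finset_sdiff, smul_finset_univ, smul_finset_singleton, smul_one]
  rw [← hsmul]
  exact (isUniformPartition_labelClass (h.perm_flatten C hC) (h.length_block C hC)).smul a

theorem card_multiplierOrbit_lt (h : IsBaseFamily n e 𝓒) (hn : n ≠ 2) :
    #(multiplierOrbit n e 𝓒) < n := by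
  have hpos := NeZero.pos n
  have neg_one_ne_one : (-1 : (ZMod n)ˣ) ≠ 1 := fun heq =>
    have : Fact (2 < n) := ⟨(Fact.out : n.Prime).two_le.lt_of_ne' hn⟩
    ZMod.neg_one_ne_one (congrArg Units.val heq)
  have neg_cast : ((-1 : (ZMod n)ˣ) : ZMod n) = (n - 1 : ℕ) := by
    rw [Nat.cast_pred hpos]; simp
  have hfix : ∀ P ∈ (𝓒.map (labelClass n)).toFinset, multiplier n e (-1) • P = P := by
    simp only [List.mem_toFinset, List.forall_mem_map]
    exact fun C hC => smul_labelClass_eq (x := (-1) ^ e) (u := (n - 1) ^ e)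
      (by rw [Units.val_pow_eq_pow_val, neg_cast, Nat.cast_pow]) (h.neg_block C hC)
  have hcard : #(𝓒.map (labelClass n)).toFinset ≤ 2 :=
    (List.toFinset_card_le _).trans_eq (by rw [List.length_map, h.length_eq])
  have hle := two_mul_card_univ_smul_le (multiplier_surjective n e) neg_one_ne_one hfix
  rw [ZMod.card_units] at hle
  have := hle.trans (Nat.mul_le_mul_left _ hcard)
  rw [multiplierOrbit]
  lia

theorem existsRDSQS (h : IsBaseFamily n e 𝓒) (hn : n ≠ 2) : ExistsRDSQS (2 * n) := by
  have hcard : #(univ.erase (1 : DihedralGroup n)) = 2 * n - 1 := by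
    rw [card_erase_of_mem (mem_univ _), card_univ, DihedralGroup.card]
  have hsteiner : IsResolvedSteiner 2 3 (univ.erase 1) (multiplierOrbit n e 𝓒) := by
    refine isResolvedSteiner_two_of_card_lt h.isUniformPartition (by norm_num) ?_ ?_
    · have := h.card_multiplierOrbit_lt hn
      lia
    · exact fun g hg g' hg' => h.exists_block (ne_of_mem_erase hg) (ne_of_mem_erase hg')
  rw [← DihedralGroup.card]
  exact hsteiner.existsRDS h.isDevelopable

end IsBaseFamily

end BaseFamilies

section BaseClasses

/-- The exponent `e` for which the multipliers `x ^ e` of the units `x` modulo `n` are all units if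
`n % 4 = 1` and the squares if `n % 4 = 3`. By the theorems of Fermat and Euler `x ^ e * x = ±1`, so
that there are at most five normalized labels. -/
def multiplierExponent (n : ℕ) : ℕ := if n % 4 = 1 then n - 2 else n / 2 - 1

/-- The two base parallel classes, in labels, for each of the eight values of `v`. -/
def baseClasses : ℕ → List (List (List ℕ))
  | 23 =>
    [[[1, 19, 23], [2, 31, 33], [3, 20, 45], [4, 30, 44], [5, 32, 38], [6, 35, 39], [7, 25, 28],
    [8, 24, 36], [9, 16, 40], [10, 12, 22], [11, 26, 37], [13, 14, 41], [15, 17, 21], [18, 27,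
    42], [29, 34, 43]],
     [[1, 6, 18], [2, 7, 9], [3, 40, 41], [4, 5, 42], [8, 20, 26], [10, 28, 44], [11, 25, 43],
     [12, 14, 35], [13, 30, 37], [15, 33, 38], [16, 22, 36], [17, 34, 39], [19, 21, 32], [23, 29,
     45], [24, 27, 31]]]
  | 29 =>
    [[[1, 28, 29], [2, 9, 55], [3, 35, 38], [4, 24, 33], [5, 25, 54], [6, 34, 40], [7, 15, 21],
    [8, 14, 22], [10, 36, 46], [11, 37, 48], [12, 30, 42], [13, 43, 56], [16, 31, 44], [17, 45,
    57], [18, 39, 50], [19, 41, 51], [20, 27, 32], [23, 47, 53], [26, 49, 52]],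
     [[1, 12, 18], [2, 15, 48], [3, 16, 42], [4, 9, 50], [5, 6, 51], [7, 19, 47], [8, 35, 44],
     [10, 22, 40], [11, 17, 28], [13, 26, 45], [14, 27, 39], [20, 25, 37], [21, 43, 52], [23, 24,
     36], [29, 30, 57], [31, 49, 54], [32, 34, 46], [33, 38, 56], [41, 53, 55]]]
  | 41 =>
    [[[1, 40, 41], [2, 57, 70], [3, 18, 75], [4, 6, 81], [5, 29, 71], [7, 59, 79], [8, 49, 63],
    [9, 15, 24], [10, 20, 72], [11, 45, 50], [12, 36, 52], [13, 68, 77], [14, 65, 67], [16, 61,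
    80], [17, 26, 32], [19, 69, 76], [21, 31, 51], [22, 47, 54], [23, 38, 48], [25, 43, 62], [27,
    56, 58], [28, 46, 55], [30, 73, 78], [33, 60, 74], [34, 44, 64], [35, 37, 42], [39, 53, 66]],
     [[1, 37, 38], [2, 21, 23], [3, 4, 40], [5, 31, 69], [6, 15, 32], [7, 33, 55], [8, 34, 68],
     [9, 26, 35], [10, 36, 54], [11, 53, 76], [12, 58, 78], [13, 17, 72], [14, 73, 74], [16, 56,
     71], [18, 20, 39], [19, 48, 57], [22, 66, 75], [24, 28, 51], [25, 52, 67], [27, 49, 50], [29,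
     45, 65], [30, 47, 70], [41, 42, 81], [43, 44, 77], [46, 79, 80], [59, 60, 62], [61, 63, 64]]]
  | 47 =>
    [[[1, 46, 47], [2, 53, 66], [3, 10, 79], [4, 58, 76], [5, 15, 29], [6, 26, 34], [7, 27, 67],
    [8, 13, 84], [9, 36, 63], [11, 38, 78], [12, 59, 72], [14, 60, 93], [16, 30, 55], [17, 31,
    86], [18, 32, 42], [19, 54, 73], [20, 40, 74], [21, 39, 75], [22, 49, 70], [23, 80, 85], [24,
    56, 61], [25, 71, 92], [28, 68, 87], [33, 48, 81], [35, 69, 82], [37, 44, 62], [41, 51, 57],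
    [43, 65, 83], [45, 88, 90], [50, 77, 89], [52, 64, 91]],
     [[1, 44, 86], [2, 29, 89], [3, 22, 26], [4, 5, 67], [6, 28, 54], [7, 8, 30], [9, 76, 78],
     [10, 75, 85], [11, 62, 88], [12, 20, 77], [13, 23, 31], [14, 55, 69], [15, 49, 72], [16, 24,
     34], [17, 39, 40], [18, 45, 52], [19, 41, 87], [21, 33, 91], [25, 50, 90], [27, 35, 64], [32,
     60, 92], [36, 53, 79], [37, 56, 66], [38, 63, 65], [42, 43, 74], [46, 51, 81], [47, 48, 93],
     [57, 59, 83], [58, 82, 84], [61, 70, 73], [68, 71, 80]]]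
  | 53 =>
    [[[1, 52, 53], [2, 8, 75], [3, 4, 91], [5, 40, 46], [6, 82, 88], [7, 13, 48], [9, 56, 100],
    [10, 12, 63], [11, 22, 95], [14, 94, 104], [15, 29, 105], [16, 85, 101], [17, 18, 32], [19,
    62, 78], [20, 76, 89], [21, 35, 36], [23, 26, 102], [24, 38, 54], [25, 61, 86], [27, 30, 57],
    [28, 73, 98], [31, 42, 64], [33, 70, 83], [34, 81, 97], [37, 58, 74], [39, 55, 65], [41, 43,
    96], [44, 59, 103], [45, 51, 84], [47, 71, 77], [49, 50, 68], [60, 67, 79], [66, 72, 90], [69,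
    87, 93], [80, 92, 99]],
     [[1, 99, 100], [2, 17, 61], [3, 37, 40], [4, 10, 30], [5, 21, 22], [6, 83, 89], [7, 11, 96],
     [8, 57, 73], [9, 69, 81], [12, 85, 91], [13, 16, 50], [14, 34, 71], [15, 65, 103], [18, 84,
     93], [19, 39, 88], [20, 62, 77], [23, 43, 49], [24, 27, 58], [25, 55, 80], [26, 29, 101],
     [28, 79, 104], [31, 32, 48], [33, 82, 97], [35, 66, 75], [36, 51, 98], [38, 56, 94], [41, 68,
     74], [42, 46, 63], [44, 78, 90], [45, 86, 102], [47, 70, 76], [52, 59, 60], [53, 54, 105],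
     [64, 67, 72], [87, 92, 95]]]
  | 59 =>
    [[[1, 12, 90], [2, 13, 49], [3, 43, 69], [4, 19, 115], [5, 6, 41], [7, 11, 28], [8, 80, 89],
    [9, 22, 116], [10, 46, 57], [14, 36, 85], [15, 30, 74], [16, 56, 108], [17, 104, 112], [18,
    53, 54], [20, 71, 86], [21, 59, 97], [23, 45, 92], [24, 66, 101], [25, 64, 98], [26, 27, 84],
    [29, 38, 67], [31, 48, 52], [32, 33, 93], [34, 79, 113], [35, 76, 111], [37, 50, 61], [39, 91,
    106], [40, 55, 62], [42, 65, 73], [44, 88, 103], [47, 58, 87], [51, 75, 83], [60, 68, 100],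
    [63, 82, 107], [70, 95, 114], [72, 96, 99], [77, 109, 117], [78, 81, 105], [94, 102, 110]],
     [[1, 23, 109], [2, 14, 107], [3, 97, 98], [4, 74, 99], [5, 11, 92], [6, 93, 95], [7, 113,
     116], [8, 106, 114], [9, 12, 41], [10, 62, 105], [13, 42, 117], [15, 81, 96], [16, 66, 77],
     [17, 46, 60], [18, 47, 50], [19, 44, 63], [20, 32, 101], [21, 34, 87], [22, 37, 103], [24,
     30, 102], [25, 38, 90], [26, 28, 65], [27, 39, 76], [29, 35, 75], [31, 33, 112], [36, 58,
     68], [40, 59, 78], [43, 100, 111], [45, 57, 70], [48, 54, 85], [49, 72, 115], [51, 55, 71],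
     [52, 61, 64], [53, 82, 84], [56, 79, 80], [67, 69, 94], [73, 86, 89], [83, 108, 110], [88,
     91, 104]]]
  | 71 =>
    [[[1, 26, 43], [2, 115, 117], [3, 97, 132], [4, 52, 53], [5, 82, 126], [6, 22, 69], [7, 23,
    57], [8, 9, 103], [10, 79, 90], [11, 17, 84], [12, 71, 118], [13, 47, 113], [14, 48, 64], [15,
    36, 122], [16, 25, 29], [18, 19, 67], [20, 72, 104], [21, 105, 127], [24, 58, 100], [27, 107,
    139], [28, 45, 70], [30, 94, 124], [31, 85, 101], [32, 39, 96], [33, 37, 80], [34, 38, 133],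
    [35, 56, 91], [40, 112, 128], [41, 89, 119], [42, 46, 55], [44, 74, 106], [49, 88, 137], [50,
    86, 108], [51, 109, 141], [54, 60, 129], [59, 65, 95], [61, 123, 134], [62, 63, 110], [66, 87,
    131], [68, 81, 116], [73, 92, 102], [75, 83, 93], [76, 98, 125], [77, 78, 99], [111, 121,
    140], [114, 135, 136], [120, 130, 138]],
     [[1, 28, 37], [2, 7, 45], [3, 76, 111], [4, 86, 133], [5, 58, 128], [6, 75, 140], [8, 56,
     59], [9, 88, 109], [10, 119, 130], [11, 48, 141], [12, 15, 63], [13, 66, 85], [14, 108, 122],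
     [16, 82, 132], [17, 33, 124], [18, 25, 47], [19, 42, 118], [20, 92, 136], [21, 74, 90], [22,
     79, 112], [23, 60, 72], [24, 46, 53], [26, 97, 116], [27, 93, 115], [29, 52, 95], [30, 87,
     99], [31, 106, 113], [32, 64, 135], [34, 43, 70], [35, 84, 103], [36, 110, 129], [38, 54,
     89], [39, 78, 117], [40, 100, 107], [41, 114, 126], [44, 71, 120], [49, 101, 134], [50, 123,
     139], [51, 77, 121], [55, 81, 131], [57, 91, 105], [61, 83, 94], [62, 104, 125], [65, 73,
     138], [67, 80, 127], [68, 102, 137], [69, 96, 98]]]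
  | 83 =>
    [[[1, 82, 83], [2, 18, 109], [3, 159, 162], [4, 85, 115], [5, 8, 88], [6, 9, 126], [7, 43,
    50], [10, 94, 104], [11, 128, 135], [12, 87, 90], [13, 45, 58], [14, 15, 29], [16, 17, 165],
    [19, 95, 108], [20, 26, 46], [21, 60, 139], [22, 44, 144], [23, 62, 110], [24, 31, 111], [25,
    38, 70], [27, 30, 147], [28, 47, 100], [32, 142, 156], [33, 40, 76], [34, 91, 92], [35, 97,
    117], [36, 55, 149], [37, 57, 63], [39, 61, 105], [41, 129, 146], [42, 103, 120], [48, 132,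
    152], [49, 157, 158], [51, 93, 107], [52, 59, 138], [53, 56, 102], [54, 68, 69], [64, 141,
    154], [65, 81, 140], [66, 67, 84], [71, 137, 155], [72, 114, 121], [73, 101, 112], [74, 77,
    123], [75, 78, 161], [79, 134, 164], [80, 145, 148], [86, 89, 124], [96, 119, 143], [98, 116,
    118], [99, 122, 136], [106, 130, 153], [113, 127, 150], [125, 160, 163], [131, 133, 151]],
     [[1, 112, 116], [2, 150, 152], [3, 58, 131], [4, 107, 111], [5, 17, 22], [6, 60, 144], [7,
     65, 72], [8, 106, 148], [9, 124, 149], [10, 36, 57], [11, 18, 76], [12, 38, 140], [13, 50,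
     63], [14, 121, 146], [15, 46, 122], [16, 94, 153], [19, 90, 158], [20, 33, 70], [21, 31,
     119], [23, 77, 105], [24, 43, 163], [25, 80, 118], [26, 47, 73], [27, 85, 108], [28, 129,
     157], [29, 87, 123], [30, 104, 115], [32, 89, 147], [34, 39, 154], [35, 151, 156], [37, 68,
     127], [40, 59, 86], [41, 142, 155], [42, 96, 138], [44, 49, 95], [45, 71, 109], [48, 93, 98],
     [51, 102, 160], [52, 62, 130], [53, 134, 145], [54, 126, 162], [55, 92, 120], [56, 141, 164],
     [61, 66, 78], [64, 91, 159], [67, 132, 136], [69, 103, 128], [74, 100, 125], [75, 101, 143],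
     [79, 133, 137], [81, 97, 99], [82, 113, 117], [83, 84, 165], [88, 135, 139], [110, 114,
     161]]]
  | _ => []

set_option maxRecDepth 100000 in
theorem isBaseFamily_baseClasses {v : ℕ}
    (hv : v ∈ ({23, 29, 41, 47, 53, 59, 71, 83} : Finset ℕ)) :
    IsBaseFamily v (multiplierExponent v) (baseClasses v) := by
  simp only [mem_insert, mem_singleton] at hv
  rcases hv with rfl | rfl | rfl | rfl | rfl | rfl | rfl | rfl <;> constructor <;> decide +kernel

end BaseClasses

/-- There exists an RDSQS(2v) for v ∈ {23, 29, 41, 47, 53, 59, 71, 83}. -/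
theorem stmt_17 (v : ℕ)
    (hv : v ∈ ({23, 29, 41, 47, 53, 59, 71, 83} : Finset ℕ)) :
    ExistsRDSQS (2 * v) := by
  have prime_and_ne_two : v.Prime ∧ v ≠ 2 := by
    simp only [mem_insert, mem_singleton] at hv
    rcases hv with rfl | rfl | rfl | rfl | rfl | rfl | rfl | rfl <;> norm_num
  have : Fact v.Prime := ⟨prime_and_ne_two.1⟩
  exact (isBaseFamily_baseClasses hv).existsRDSQS prime_and_ne_two.2
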